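/- arXiv:2406.15589 — 2 statements merged into one kernel-verified Lean document; each statement's English description precedes it below -/
import Mathlib

section
/- Let n = 3 and let (x₁,y₁,z₁), (x₂,y₂,z₂) ∈ W = F² × C. Then there exists z₃ ∈ C such that for every ω = (ω₁,ω₂) ∈ F² one has F_ω(x₁,y₁,z₁) + F_ω(x₂,y₂,z₂) = F_ω(x₁+x₂, y₁+y₂, z₃). In particular the code {(F_ω(P))_{ω} : P ∈ W} is closed under coordinatewise addition. -/
/-- The affine form `F_ω` (case `n = 3`) associated to `ω = (ω₁, ω₂) ∈ F²`. -/
def Fw {F : Type*} [Field F] (q : ℕ) (a b ω₁ ω₂ x y z : F) : F :=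
  z ^ q - z + a ^ q * (x ^ (2 * q) + y ^ (2 * q)) - a * (x ^ 2 + y ^ 2)
    - (b ^ q - b) * (x ^ (q + 1) + y ^ (q + 1))
    + (2 * a ^ q * ω₁ ^ q - (b ^ q - b) * ω₁) * x ^ q
    + (2 * a ^ q * ω₂ ^ q - (b ^ q - b) * ω₂) * y ^ q
    - (2 * a * ω₁ + (b ^ q - b) * ω₁ ^ q) * x
    - (2 * a * ω₂ + (b ^ q - b) * ω₂ ^ q) * y

/-- The `q`-power map is additive on a field with `q ^ 2` elements. -/
theorem add_pow_q_aux (q : ℕ) (hq : IsPrimePow q)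
    (F : Type*) [Field F] [Fintype F] (hF : Fintype.card F = q ^ 2) (x y : F) :
    (x + y) ^ q = x ^ q + y ^ q := by
  obtain ⟨p, k, hp, hk, rfl⟩ := hq
  have hp' : p.Prime := hp.nat_prime
  haveI : Fact p.Prime := ⟨hp'⟩
  haveI : CharP F p := by
    have h0 : ((p : ℕ) : F) = 0 := by
      have h := Nat.cast_card_eq_zero F
      rw [hF] at h
      push_cast at h
      simpa [hk.ne'] using h
    obtain ⟨r, hr⟩ := CharP.exists F
    have hd : r ∣ p := (CharP.cast_eq_zero_iff F r p).1 h0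
    rcases (Nat.dvd_prime hp').1 hd with h1 | h1
    · exact absurd h1 (CharP.char_ne_one F r)
    · exact h1 ▸ hr
  exact add_pow_char_pow x y p k

/-- Additivity of the evaluation code: for points of `W = F² × C` the sum of the
values of `F_ω` at two points is the value of `F_ω` at a third point of `W`,
simultaneously for all `ω`. -/
theorem code_closed_under_addition (q : ℕ) (hq : IsPrimePow q)
    (F : Type*) [Field F] [Fintype F] (hF : Fintype.card F = q ^ 2)
    (a b : F) (ha : a ≠ 0) (hb : b ^ q ≠ b)
    (C : Finset F) (hC : ∀ x : F, ∃! c : F, c ∈ C ∧ (c - x) ^ q = c - x)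
    (x₁ y₁ z₁ x₂ y₂ z₂ : F) (h₁ : z₁ ∈ C) (h₂ : z₂ ∈ C) :
    ∃ z₃ ∈ C, ∀ ω₁ ω₂ : F,
      Fw q a b ω₁ ω₂ x₁ y₁ z₁ + Fw q a b ω₁ ω₂ x₂ y₂ z₂
        = Fw q a b ω₁ ω₂ (x₁ + x₂) (y₁ + y₂) z₃ := by
  have hadd := add_pow_q_aux q hq F hF
  have hsub : ∀ x y : F, (x - y) ^ q = x ^ q - y ^ q := by
    intro x y
    have h := hadd (x - y) y
    rw [sub_add_cancel] at h
    rw [h]; ring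
  have hqq : ∀ x : F, (x ^ q) ^ q = x := by
    intro x
    rw [← pow_mul, ← sq, ← hF, FiniteField.pow_card]
  obtain ⟨c, ⟨hc, hc'⟩, -⟩ := hC (z₁ + z₂ - (a * (x₁ * x₂ + y₁ * y₂) + a * (x₁ * x₂ + y₁ * y₂))
    + b * (x₁ ^ q * x₂ + x₁ * x₂ ^ q + (y₁ ^ q * y₂ + y₁ * y₂ ^ q)))
  refine ⟨c, hc, fun ω₁ ω₂ => ?_⟩
  simp only [hadd, hsub, mul_pow, hqq] at hc'
  simp only [Fw, pow_succ, pow_zero, one_mul, mul_comm 2 q, pow_mul, hadd]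
  linear_combination -hc'
end

section
/- Suppose q > 4. Then the evaluation map P ↦ (F_ω(P))_{ω ∈ Ω} from W = F² × C to T₀^Ω is injective, so the code C = {(F_ω(P))_{ω ∈ Ω} : P ∈ W} has exactly q⁵ codewords; moreover any two distinct codewords differ in at least q − 4 of the q coordinates, and the minimum Hamming distance of C is exactly q − 4. Thus C is a K-linear MDS code with parameters [q, 5, q−4] over the q-element alphabet T₀. -/
/-- The codeword of a point `P ∈ F³`: its coordinates are indexed by
`t ∈ K = {t : F // t^q = t}` (parametrizing `Ω = {(t + εt², t³ + εt⁴) : t ∈ K}`),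
and the coordinate at `t` is the value of `F_{ω(t)}` at `P`. -/
def codeword {F : Type*} [Field F] (q : ℕ) (a b ε : F) (P : F × F × F)
    (t : {t : F // t ^ q = t}) : F :=
  Fw q a b (t.1 + ε * t.1 ^ 2) (t.1 ^ 3 + ε * t.1 ^ 4) P.1 P.2.1 P.2.2

/-- the Frobenius -/
theorem exists_frob (q : ℕ) (hq : IsPrimePow q) (F : Type*) [Field F] [Fintype F]
    (hF : Fintype.card F = q ^ 2) : ∃ φ : F →+* F, (∀ x, φ x = x ^ q) ∧ ∀ x, φ (φ x) = x := by
  obtain ⟨p, n, hp, hn, rfl⟩ := hq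
  have hp' : p.Prime := hp.nat_prime
  have : Fact p.Prime := ⟨hp'⟩
  have hch : CharP F p := by
    obtain ⟨r, hr⟩ := CharP.exists F
    obtain ⟨m, hr', hm⟩ := FiniteField.card F r
    have : p ∣ r ^ (m : ℕ) := by
      rw [← hm, hF, ← pow_mul]
      exact dvd_pow_self _ (by omega)
    have := (Nat.prime_dvd_prime_iff_eq hp' hr').1 (hp'.dvd_of_dvd_pow this)
    rw [this]; exact hr
  refine ⟨iterateFrobenius F p n, fun x => iterateFrobenius_def .., fun x => ?_⟩
  rw [iterateFrobenius_def, iterateFrobenius_def, ← pow_mul, ← sq, ← hF, FiniteField.pow_card]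

theorem card_pow_add_le (q : ℕ) (hq : 1 < q) {F : Type*} [Field F] [Fintype F] [DecidableEq F]
    (s : F) : (Finset.univ.filter (fun x : F => x ^ q = s * x)).card ≤ q := by
  classical
  set p : Polynomial F := Polynomial.X ^ q - Polynomial.C s * Polynomial.X with hp
  have hd : p.natDegree = q := by
    rw [hp]
    rw [Polynomial.natDegree_sub_eq_left_of_natDegree_lt] <;> simp only [Polynomial.natDegree_X_pow]
    exact lt_of_le_of_lt (by compute_degree : _ ≤ 1) hq
  have hp0 : p ≠ 0 := by
    rintro h
    rw [h] at hd; simp at hd; omega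
  have hsub : (Finset.univ.filter (fun x : F => x ^ q = s * x)) ⊆ p.roots.toFinset := by
    intro x hx
    simp only [Finset.mem_filter, Finset.mem_univ, true_and] at hx
    rw [Multiset.mem_toFinset, Polynomial.mem_roots hp0]
    simp [hp, hx]
  calc _ ≤ _ := Finset.card_le_card hsub
    _ ≤ _ := Multiset.toFinset_card_le _
    _ ≤ _ := Polynomial.card_roots' p
    _ = q := hd

theorem poly_zeros (q : ℕ) {F : Type*} [Field F] [Fintype F] [DecidableEq F]
    (c0 c1 c2 c3 c4 : F) (h : 4 < (Finset.univ.filter (fun t : {t : F // t ^ q = t} =>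
      c0 + c1 * t.1 + c2 * t.1 ^ 2 + c3 * t.1 ^ 3 + c4 * t.1 ^ 4 = 0)).card) :
    c0 = 0 ∧ c1 = 0 ∧ c2 = 0 ∧ c3 = 0 ∧ c4 = 0 := by
  classical
  open Polynomial in
  set p : Polynomial F := C c0 + C c1 * X + C c2 * X ^ 2 + C c3 * X ^ 3 + C c4 * X ^ 4 with hp
  have hd : p.natDegree ≤ 4 := by rw [hp]; compute_degree
  have hp0 : p = 0 := by
    by_contra hp0
    have hsub : ((Finset.univ.filter (fun t : {t : F // t ^ q = t} =>
      c0 + c1 * t.1 + c2 * t.1 ^ 2 + c3 * t.1 ^ 3 + c4 * t.1 ^ 4 = 0)).map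
        (Function.Embedding.subtype _)) ⊆ p.roots.toFinset := by
      intro x hx
      simp only [Finset.mem_map, Finset.mem_filter, Finset.mem_univ, true_and] at hx
      obtain ⟨t, ht, rfl⟩ := hx
      simp [hp0]
      simp [hp, ht]
    have := Finset.card_le_card hsub
    rw [Finset.card_map] at this
    have h2 := Multiset.toFinset_card_le p.roots
    have h3 := Polynomial.card_roots' p
    omega
  have e : ∀ n, p.coeff n = 0 := by simp [hp0]
  have e0 := e 0
  have e1 := e 1
  have e2 := e 2
  have e3 := e 3
  have e4 := e 4
  simp [hp, Polynomial.coeff_X, Polynomial.coeff_X_pow, Polynomial.coeff_C] at e0 e1 e2 e3 e4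
  exact ⟨e0, e1, e2, e3, e4⟩

/-- For `q > 4`, the evaluation map `P ↦ (F_ω(P))_{ω ∈ Ω}` is injective on
`W = F² × C`, the resulting code has exactly `q⁵` codewords, any two distinct
codewords differ in at least `q - 4` of the `q` coordinates, and the minimum
distance is exactly `q - 4`: the code is a `K`-linear `[q, 5, q-4]` MDS code. -/
theorem mds_code (q : ℕ) (hq : IsPrimePow q) (hq4 : 4 < q)
    (F : Type*) [Field F] [Fintype F] [DecidableEq F] (hF : Fintype.card F = q ^ 2)
    (a b : F) (ha : a ≠ 0) (hb : b ^ q ≠ b)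
    (hab : 4 * a ^ (q + 1) + (b ^ q - b) ^ 2 ≠ 0)
    (ε : F) (hε : ε ^ q ≠ ε)
    (C : Finset F) (hC : ∀ x : F, ∃! c : F, c ∈ C ∧ (c - x) ^ q = c - x) :
    (∀ P ∈ Finset.univ.filter (fun P : F × F × F => P.2.2 ∈ C),
      ∀ P' ∈ Finset.univ.filter (fun P : F × F × F => P.2.2 ∈ C),
        codeword q a b ε P = codeword q a b ε P' → P = P') ∧
    ((Finset.univ.filter (fun P : F × F × F => P.2.2 ∈ C)).image
        (codeword q a b ε)).card = q ^ 5 ∧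
    (∀ P ∈ Finset.univ.filter (fun P : F × F × F => P.2.2 ∈ C),
      ∀ P' ∈ Finset.univ.filter (fun P : F × F × F => P.2.2 ∈ C), P ≠ P' →
        q - 4 ≤ (Finset.univ.filter (fun t : {t : F // t ^ q = t} =>
          codeword q a b ε P t ≠ codeword q a b ε P' t)).card) ∧
    (∃ P ∈ Finset.univ.filter (fun P : F × F × F => P.2.2 ∈ C),
      ∃ P' ∈ Finset.univ.filter (fun P : F × F × F => P.2.2 ∈ C), P ≠ P' ∧
        (Finset.univ.filter (fun t : {t : F // t ^ q = t} =>
          codeword q a b ε P t ≠ codeword q a b ε P' t)).card = q - 4) := by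
  obtain ⟨φ, hφ, hφφ⟩ := exists_frob q hq F hF
  -- the map D
  let D : F →+ F := φ.toAddMonoidHom - AddMonoidHom.id F
  have hD : ∀ x, D x = φ x - x := fun x => rfl
  have hKle := card_pow_add_le q (by omega) (1 : F)
  have hTle := card_pow_add_le q (by omega) (-1 : F)
  simp only [one_mul, neg_mul] at hKle hTle
  set T := Finset.univ.filter (fun x : F => x ^ q = -x) with hT
  set R := Finset.univ.image D with hR
  have hRT : R ⊆ T := by
    intro x hx
    rw [hR, Finset.mem_image] at hx
    obtain ⟨y, -, rfl⟩ := hx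
    simp [hT, ← hφ, hD, hφφ]
  have hRle : R.card ≤ q := (Finset.card_le_card hRT).trans hTle
  have hprod : (Finset.univ.filter (fun x : F => x ^ q = x)).card * R.card = q ^ 2 := by
    have h1 := AddSubgroup.card_eq_card_quotient_mul_card_addSubgroup D.ker
    rw [Nat.card_congr (QuotientAddGroup.quotientKerEquivRange D).toEquiv] at h1
    rw [Nat.card_eq_fintype_card, hF] at h1
    rw [h1, mul_comm]
    congr 1
    · rw [← Nat.card_eq_finsetCard]
      refine Nat.card_congr (Equiv.subtypeEquivRight fun x => ?_)
      simp [hR]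
    · rw [← Nat.card_eq_finsetCard]
      refine Nat.card_congr (Equiv.subtypeEquivRight fun x => ?_)
      simp [AddMonoidHom.mem_ker, hD, hφ, sub_eq_zero]
  have hKc : (Finset.univ.filter (fun x : F => x ^ q = x)).card = q := by nlinarith
  have hRc : R.card = q := by nlinarith
  have hCc : C.card = q := by
    rw [← hRc]
    refine Finset.card_bij (fun c _ => D c) ?_ ?_ ?_
    · intro c _
      simp [hR]
    · intro c hc c' hc' h
      refine (hC c').unique ⟨hc, ?_⟩ ⟨hc', ?_⟩
      · rw [← hφ, map_sub]
        simp only [hD] at h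
        linear_combination h
      · rw [sub_self, zero_pow (by omega)]
    · intro y hy
      rw [hR, Finset.mem_image] at hy
      obtain ⟨x, -, rfl⟩ := hy
      obtain ⟨c, ⟨hc, h⟩, -⟩ := hC x
      refine ⟨c, hc, ?_⟩
      rw [← hφ, map_sub] at h
      simp only [hD]
      linear_combination h
  have hKt : Fintype.card {t : F // t ^ q = t} = q := by
    rw [Fintype.card_subtype, hKc]
  set B := b ^ q - b with hB
  have hφB : φ B = -B := by simp only [hB, ← hφ, map_sub, hφφ]; ring
  set L1 := 2 * a + B with hL1
  set L2 := 2 * a * ε + B * φ ε with hL2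
  let c0 : F × F × F → F := fun P => D P.2.2 + D (a * (P.1 ^ 2 + P.2.1 ^ 2))
    - B * (P.1 * φ P.1 + P.2.1 * φ P.2.1)
  have hcw : ∀ P t, codeword q a b ε P t = c0 P + D (L1 * P.1) * t.1 + D (L2 * P.1) * t.1 ^ 2
      + D (L1 * P.2.1) * t.1 ^ 3 + D (L2 * P.2.1) * t.1 ^ 4 := by
    rintro ⟨x, y, z⟩ ⟨t, ht⟩
    have ht' : φ t = t := by rw [hφ, ht]
    have h2 : (φ 2 : F) = 2 := map_ofNat φ 2
    simp only [codeword, Fw, c0, hD, pow_succ x q, pow_succ y q, mul_comm 2 q, pow_mul, ← hB]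
    simp only [← hφ, map_add, map_mul, map_pow, ht', hL1, hL2, hφφ, hφB, h2]
    ring
  have hcT : ∀ P t, codeword q a b ε P t ∈ T := by
    intro P t
    have ht' : φ t.1 = t.1 := by rw [hφ, t.2]
    rw [hcw]
    simp only [hT, Finset.mem_filter, Finset.mem_univ, true_and, ← hφ, c0, hD, map_add, map_sub,
      map_mul, map_pow, hφφ, hφB, ht']
    ring
  have hLinj : ∀ w, 2 * a * w + B * φ w = 0 → w = 0 := by
    intro w hw
    by_contra hw0
    have h2 : (φ 2 : F) = 2 := map_ofNat φ 2
    have hw2 := congrArg φ hw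
    simp only [map_add, map_mul, hφφ, hφB, map_zero, h2] at hw2
    have hw1 : φ w ≠ 0 := by simpa using hw0
    apply hab
    rw [pow_succ, ← hφ]
    apply mul_right_cancel₀ (mul_ne_zero hw0 hw1)
    linear_combination (2 * φ a * φ w) * hw - B * φ w * hw2
  have hxinj : ∀ x, D (L1 * x) = 0 → D (L2 * x) = 0 → x = 0 := by
    intro x h1 h2
    by_contra hx
    rw [hD, sub_eq_zero] at h1 h2
    have hL10 : L1 ≠ 0 := by
      intro h
      have := hLinj 1 (by rw [map_one]; linear_combination h)
      exact one_ne_zero this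
    have h3 := hLinj (L1 * x * ε - L2 * x) (by
      rw [map_sub, map_mul, h1, h2, hL1, hL2]; ring)
    have h4 : φ (L1 * x * ε) = φ (L2 * x) := by rw [sub_eq_zero.1 h3]
    rw [map_mul, h1, h2] at h4
    apply hε
    rw [← hφ]
    apply mul_left_cancel₀ (mul_ne_zero hL10 hx)
    linear_combination h4 - h3
  -- agreement in more than four coordinates forces equality
  have key : ∀ P P' : F × F × F, P.2.2 ∈ C → P'.2.2 ∈ C →
      4 < (Finset.univ.filter (fun t : {t : F // t ^ q = t} =>
          codeword q a b ε P t = codeword q a b ε P' t)).card → P = P' := by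
    rintro ⟨x, y, z⟩ ⟨x', y', z'⟩ hz hz' h
    obtain ⟨e0, e1, e2, e3, e4⟩ := poly_zeros q (c0 (x, y, z) - c0 (x', y', z'))
      (D (L1 * (x - x'))) (D (L2 * (x - x'))) (D (L1 * (y - y'))) (D (L2 * (y - y'))) (by
        refine lt_of_lt_of_eq h (congrArg Finset.card (Finset.filter_congr fun t _ => ?_))
        rw [hcw, hcw]
        simp only [mul_sub, map_sub]
        constructor <;> intro h <;> linear_combination h)
    have hx := sub_eq_zero.1 (hxinj _ e1 e2)
    have hy := sub_eq_zero.1 (hxinj _ e3 e4)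
    subst hx hy
    simp only [c0, hD] at e0
    have : z = z' := by
      refine (hC z').unique ⟨hz, ?_⟩ ⟨hz', ?_⟩
      · rw [← hφ, map_sub]
        linear_combination e0
      · rw [sub_self, zero_pow (by omega)]
    rw [this]
  have hsum : ∀ P P' : F × F × F, (Finset.univ.filter (fun t : {t : F // t ^ q = t} =>
          codeword q a b ε P t = codeword q a b ε P' t)).card +
        (Finset.univ.filter (fun t : {t : F // t ^ q = t} =>
          codeword q a b ε P t ≠ codeword q a b ε P' t)).card = q := by
    intro P P'
    rw [Finset.card_filter_add_card_filter_not, Finset.card_univ, hKt]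
  have hinj : ∀ P ∈ Finset.univ.filter (fun P : F × F × F => P.2.2 ∈ C),
      ∀ P' ∈ Finset.univ.filter (fun P : F × F × F => P.2.2 ∈ C),
        codeword q a b ε P = codeword q a b ε P' → P = P' := by
    intro P hP P' hP' h
    refine key P P' (by simpa using hP) (by simpa using hP') ?_
    simp only [h, Finset.filter_true, Finset.card_univ, hKt]
    exact hq4
  have hW : (Finset.univ.filter (fun P : F × F × F => P.2.2 ∈ C)).card = q ^ 5 := by
    have : Finset.univ.filter (fun P : F × F × F => P.2.2 ∈ C) =
        (Finset.univ : Finset F) ×ˢ ((Finset.univ : Finset F) ×ˢ C) := by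
      ext P; simp
    rw [this, Finset.card_product, Finset.card_product, Finset.card_univ, hF, hCc]
    ring
  have hmin : ∀ P ∈ Finset.univ.filter (fun P : F × F × F => P.2.2 ∈ C),
      ∀ P' ∈ Finset.univ.filter (fun P : F × F × F => P.2.2 ∈ C), P ≠ P' →
        q - 4 ≤ (Finset.univ.filter (fun t : {t : F // t ^ q = t} =>
          codeword q a b ε P t ≠ codeword q a b ε P' t)).card := by
    intro P hP P' hP' hne
    have := hsum P P'
    by_contra hlt
    exact hne (key P P' (by simpa using hP) (by simpa using hP') (by omega))
  refine ⟨hinj, ?_, hmin, ?_⟩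
  · rw [Finset.card_image_of_injOn, hW]
    intro P hP P' hP' h
    exact hinj P (by simpa using hP) P' (by simpa using hP') h
  · obtain ⟨S, hS, hS4⟩ := Finset.exists_subset_card_eq
      (s := (Finset.univ : Finset {t : F // t ^ q = t})) (n := 4)
      (by rw [Finset.card_univ, hKt]; omega)
    let f : F × F × F → (S → F) := fun P t => codeword q a b ε P t.1
    obtain ⟨P, hP, P', hP', hne, hf⟩ := Finset.exists_ne_map_eq_of_card_lt_of_maps_to
      (s := Finset.univ.filter (fun P : F × F × F => P.2.2 ∈ C))
      (t := Fintype.piFinset (fun _ : S => T)) (f := f) (by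
        rw [Fintype.card_piFinset, hW, Finset.prod_const, Finset.card_univ, Fintype.card_coe, hS4]
        calc T.card ^ 4 ≤ q ^ 4 := Nat.pow_le_pow_left hTle 4
          _ < q ^ 5 := Nat.pow_lt_pow_right (by omega) (by omega))
      (by intro P _; simp only [Finset.mem_coe, Fintype.mem_piFinset]; intro t; exact hcT _ _)
    refine ⟨P, hP, P', hP', hne, le_antisymm ?_ (hmin P hP P' hP' hne)⟩
    have h1 := hsum P P'
    have h2 : S.card ≤ (Finset.univ.filter (fun t : {t : F // t ^ q = t} =>
          codeword q a b ε P t = codeword q a b ε P' t)).card := by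
      apply Finset.card_le_card
      intro t ht
      simp only [Finset.mem_filter, Finset.mem_univ, true_and]
      exact congrFun hf ⟨t, ht⟩
    omega
end
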